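/- Let β, x ∈ ℝ with β ≠ 0, y ∈ {0,1}, and δ ≥ 0. Define the logistic loss ℓ(u) = −y·log σ(βu) − (1−y)·log(1 − σ(βu)) for u ∈ ℝ, where σ(t) = 1/(1+e^{−t}). Then λ* = δ·(1−2y)·sign(β) satisfies |λ*| ≤ δ and ℓ(x + λ*) ≥ ℓ(x + λ) for every λ ∈ [−δ, δ]; i.e. λ* maximizes the logistic loss over perturbations of size at most δ. -/

import Mathlib

/-- The logistic sigmoid `σ(t) = 1/(1+e^{-t})`. -/
noncomputable def sigmoid (t : ℝ) : ℝ := 1 / (1 + Real.exp (-t))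

/-!
For a label `y ∈ {0, 1}` the loss at logit `t` collapses to `log (1 + exp ((1 - 2 * y) * t))`, an
increasing function of `(1 - 2 * y) * t`. Maximizing it over perturbations thus amounts to
maximizing a linear form with slope `(1 - 2 * y) * β` over `[-δ, δ]`, and `δ` times the sign
of the slope does this.
-/

lemma real_sign_eq_coe_sign (r : ℝ) : Real.sign r = SignType.sign r := by
  rcases lt_trichotomy r 0 with hr | rfl | hr
  · simp [Real.sign_of_neg hr, sign_neg hr]
  · simp
  · simp [Real.sign_of_pos hr, sign_pos hr]

lemma mul_real_sign_self (r : ℝ) : r * Real.sign r = |r| := by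
  rw [real_sign_eq_coe_sign, self_mul_sign]

lemma abs_real_sign_le_one (r : ℝ) : |Real.sign r| ≤ 1 := by
  rcases Real.sign_apply_eq r with h | h | h <;> simp [h]

lemma abs_mul_real_sign_le {δ : ℝ} (hδ : 0 ≤ δ) (r : ℝ) : |δ * Real.sign r| ≤ δ := by
  rw [abs_mul, abs_of_nonneg hδ]
  exact mul_le_of_le_one_right hδ (abs_real_sign_le_one r)

lemma isMaxOn_mul_add_mul_real_sign (c x δ : ℝ) :
    IsMaxOn (fun l => c * (x + l)) (Set.Icc (-δ) δ) (δ * Real.sign c) := by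
  intro l hl
  have hle : c * l ≤ c * (δ * Real.sign c) := calc
    c * l ≤ |c| * |l| := (le_abs_self _).trans_eq (abs_mul c l)
    _ ≤ |c| * δ := by gcongr; exact abs_le.mpr hl
    _ = c * (δ * Real.sign c) := by rw [← mul_real_sign_self]; ring
  simpa only [Set.mem_ofPred_eq, mul_add, add_le_add_iff_left] using hle

lemma monotone_log_one_add_exp : Monotone fun t : ℝ => Real.log (1 + Real.exp t) := by
  intro s t hst
  dsimp only
  gcongr

lemma neg_log_sigmoid (t : ℝ) : -Real.log (sigmoid t) = Real.log (1 + Real.exp (-t)) := by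
  rw [sigmoid, one_div, Real.log_inv, neg_neg]

lemma one_sub_sigmoid (t : ℝ) : 1 - sigmoid t = sigmoid (-t) := by
  simpa only [sigmoid, one_div, Real.sigmoid_def] using (Real.sigmoid_neg t).symm

lemma logistic_loss_eq_log_one_add_exp {y : ℝ} (hy : y = 0 ∨ y = 1) (t : ℝ) :
    -y * Real.log (sigmoid t) - (1 - y) * Real.log (1 - sigmoid t) =
      Real.log (1 + Real.exp ((1 - 2 * y) * t)) := by
  rcases hy with rfl | rfl
  · simpa [one_sub_sigmoid] using neg_log_sigmoid (-t)
  · convert neg_log_sigmoid t using 1 <;> ring_nf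

lemma label_sign_mul_real_sign {y : ℝ} (hy : y = 0 ∨ y = 1) (r : ℝ) :
    (1 - 2 * y) * Real.sign r = Real.sign ((1 - 2 * y) * r) := by
  rcases hy with rfl | rfl <;> norm_num [Real.sign_neg]

/-- For logistic regression with coefficient `β ≠ 0`, label `y ∈ {0,1}` and logistic loss
`ℓ(u) = -y log σ(βu) - (1-y) log(1-σ(βu))`, the perturbation
`λ* = δ(1-2y) sign(β)` satisfies `|λ*| ≤ δ` and maximizes `ℓ(x+λ)` over `λ ∈ [-δ, δ]`. -/
theorem logreg_best_pointwise_attack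
    (β x y δ : ℝ) (hβ : β ≠ 0) (hy : y = 0 ∨ y = 1) (hδ : 0 ≤ δ)
    (ℓ : ℝ → ℝ)
    (hℓ : ℓ = fun u => -y * Real.log (sigmoid (β * u))
        - (1 - y) * Real.log (1 - sigmoid (β * u))) :
    |δ * (1 - 2 * y) * Real.sign β| ≤ δ ∧
    ∀ l ∈ Set.Icc (-δ) δ, ℓ (x + l) ≤ ℓ (x + δ * (1 - 2 * y) * Real.sign β) := by
  simp only [hℓ, logistic_loss_eq_log_one_add_exp hy, ← mul_assoc (1 - 2 * y)]
  rw [mul_assoc δ, label_sign_mul_real_sign hy]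
  have hmax := (isMaxOn_mul_add_mul_real_sign ((1 - 2 * y) * β) x δ).comp_mono
    monotone_log_one_add_exp
  exact ⟨abs_mul_real_sign_le hδ _, fun l hl => hmax hl⟩
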